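/- arXiv:1404.0422 — 3 statements merged into one kernel-verified Lean document; each statement's English description precedes it below -/
import Mathlib

section
/- Fix x ∈ ℝ and t > 0. The pushforward of the Gaussian measure gaussianReal x t under the absolute value map y ↦ |y| is absolutely continuous with respect to Lebesgue measure on [0, ∞), with density y ↦ (1/√(2πt))·(exp(−(y−x)²/(2t)) + exp(−(y+x)²/(2t))) for y ≥ 0; equivalently, for every Borel set A ⊆ [0, ∞), (gaussianReal x t) {y : |y| ∈ A} = ∫_A (1/√(2πt))·(exp(−(y−x)²/(2t)) + exp(−(y+x)²/(2t))) dy. (This is the transition density p^R(s, x; t, y) of reflected Brownian motion.) -/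
open MeasureTheory ProbabilityTheory Real NNReal

/-!
The absolute value is the identity on `[0, ∞)` and the negation on `(-∞, 0)`. Hence, for a measure
`μ` that does not charge `0`, its pushforward is the restriction to `[0, ∞)` of the sum of `μ` and
the reflection of `μ`. The reflection of a Gaussian of mean `x` is the Gaussian of mean `-x` with
the same variance, so the two densities add up.
-/

section MapAbs

variable {α : Type*} [AddCommGroup α] [LinearOrder α] [IsOrderedAddMonoid α]
  [TopologicalSpace α] [ClosedIciTopology α] [MeasurableSpace α] [OpensMeasurableSpace α]

lemma map_abs_restrict_Ici (μ : Measure α) :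
    (μ.restrict (Set.Ici 0)).map abs = μ.restrict (Set.Ici 0) := by
  have abs_ae_eq_id : abs =ᵐ[μ.restrict (Set.Ici 0)] id :=
    ae_restrict_of_forall_mem measurableSet_Ici fun _ hy ↦ abs_of_nonneg hy
  rw [Measure.map_congr abs_ae_eq_id, Measure.map_id]

lemma map_abs_restrict_Iio (μ : Measure α) :
    (μ.restrict (Set.Iio 0)).map abs = (μ.restrict (Set.Iio 0)).map (fun y ↦ -y) :=
  Measure.map_congr <| ae_restrict_of_forall_mem measurableSet_Iio fun _ hy ↦ abs_of_neg hy

variable [MeasurableNeg α] [MeasurableSup₂ α]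

lemma map_abs_eq_restrict_add_map_neg {μ : Measure α} (hμ : μ {0} = 0) :
    μ.map abs = (μ + μ.map (fun y ↦ -y)).restrict (Set.Ici 0) := by
  have map_neg_restrict_Iio : (μ.restrict (Set.Iio 0)).map (fun y ↦ -y)
      = (μ.map (fun y ↦ -y)).restrict (Set.Ici 0) := by
    rw [Measure.restrict_map measurable_neg measurableSet_Ici, Set.neg_preimage, Set.neg_Ici,
      neg_zero, Measure.restrict_congr_set (Iio_ae_eq_Iic' hμ)]
  calc μ.map abs
      = (μ.restrict (Set.Ici 0)).map abs + (μ.restrict (Set.Iio 0)).map abs := by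
        rw [← Measure.map_add _ _ measurable_abs, ← Set.compl_Ici,
          Measure.restrict_add_restrict_compl measurableSet_Ici]
    _ = μ.restrict (Set.Ici 0) + (μ.map (fun y ↦ -y)).restrict (Set.Ici 0) := by
        rw [map_abs_restrict_Ici, map_abs_restrict_Iio, map_neg_restrict_Iio]
    _ = (μ + μ.map (fun y ↦ -y)).restrict (Set.Ici 0) := (Measure.restrict_add _ _ _).symm

end MapAbs

/-- The density on `[0, ∞)` of `|Y|` for `Y` Gaussian of mean `x` and variance `t`; this is the
transition density `p^R(s, x; s + t, y)` of reflected Brownian motion. It is defined on all of `ℝ`,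
as an even function of `y`, and vanishes identically when `t = 0`. -/
noncomputable def reflectedGaussianPDFReal (x : ℝ) (t : ℝ≥0) (y : ℝ) : ℝ :=
  (1 / √(2 * π * t)) * (exp (-(y - x) ^ 2 / (2 * t)) + exp (-(y + x) ^ 2 / (2 * t)))

lemma reflectedGaussianPDFReal_eq_add (x : ℝ) (t : ℝ≥0) :
    reflectedGaussianPDFReal x t = gaussianPDFReal x t + gaussianPDFReal (-x) t := by
  ext y
  simp only [reflectedGaussianPDFReal, gaussianPDFReal, Pi.add_apply, sub_neg_eq_add, one_div,
    mul_add]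

lemma reflectedGaussianPDFReal_nonneg (x : ℝ) (t : ℝ≥0) (y : ℝ) :
    0 ≤ reflectedGaussianPDFReal x t y := by
  unfold reflectedGaussianPDFReal
  positivity

lemma integrable_reflectedGaussianPDFReal (x : ℝ) (t : ℝ≥0) :
    Integrable (reflectedGaussianPDFReal x t) := by
  rw [reflectedGaussianPDFReal_eq_add]
  exact (integrable_gaussianPDFReal x t).add (integrable_gaussianPDFReal (-x) t)

lemma ofReal_reflectedGaussianPDFReal (x : ℝ) (t : ℝ≥0) :
    (fun y ↦ ENNReal.ofReal (reflectedGaussianPDFReal x t y))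
      = gaussianPDF x t + gaussianPDF (-x) t := by
  ext y
  rw [reflectedGaussianPDFReal_eq_add, Pi.add_apply, Pi.add_apply,
    ENNReal.ofReal_add (gaussianPDFReal_nonneg x t y) (gaussianPDFReal_nonneg (-x) t y),
    gaussianPDF, gaussianPDF]

lemma gaussianReal_map_abs (x : ℝ) {t : ℝ≥0} (ht : t ≠ 0) :
    (gaussianReal x t).map abs = (volume.restrict (Set.Ici 0)).withDensity
      (fun y ↦ ENNReal.ofReal (reflectedGaussianPDFReal x t y)) := by
  have := nullSingletonClass_gaussianReal (μ := x) ht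
  rw [map_abs_eq_restrict_add_map_neg (measure_singleton 0), gaussianReal_map_neg,
    gaussianReal_of_var_ne_zero x ht, gaussianReal_of_var_ne_zero (-x) ht,
    ← withDensity_add_left (measurable_gaussianPDF x t), ← ofReal_reflectedGaussianPDFReal,
    restrict_withDensity measurableSet_Ici]

/-- The pushforward of the Gaussian measure `gaussianReal x t` under `y ↦ |y|` has density
`y ↦ (1/√(2πt))·(exp(−(y−x)²/(2t)) + exp(−(y+x)²/(2t)))` on `[0, ∞)` with respect to
Lebesgue measure: this is the transition density of reflected Brownian motion. -/
theorem reflected_gaussian_density (x : ℝ) (t : ℝ≥0) (ht : 0 < t)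
    (A : Set ℝ) (hA : MeasurableSet A) (hA0 : A ⊆ Set.Ici 0) :
    (gaussianReal x t) {y : ℝ | |y| ∈ A} =
      ENNReal.ofReal (∫ y in A,
        (1 / Real.sqrt (2 * Real.pi * t)) *
          (Real.exp (-(y - x) ^ 2 / (2 * t)) + Real.exp (-(y + x) ^ 2 / (2 * t)))) := by
  calc (gaussianReal x t) {y : ℝ | |y| ∈ A}
      = (gaussianReal x t).map abs A := (Measure.map_apply measurable_abs hA).symm
    _ = ∫⁻ y in A, ENNReal.ofReal (reflectedGaussianPDFReal x t y) := by
        rw [gaussianReal_map_abs x ht.ne', withDensity_apply _ hA, Measure.restrict_restrict hA,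
          Set.inter_eq_left.mpr hA0]
    _ = ENNReal.ofReal (∫ y in A, reflectedGaussianPDFReal x t y) :=
        (ofReal_integral_eq_lintegral_ofReal
          (integrable_reflectedGaussianPDFReal x t).integrableOn
          (ae_of_all _ (reflectedGaussianPDFReal_nonneg x t))).symm
end

section
/- The family n ↦ (−1)^n · exp(−2√2·n²) · cosh(2√2·n), indexed by n ∈ ℤ, is summable, and its sum over all n ∈ ℤ equals 0: ∑_{n∈ℤ} (−1)^n exp(−√8·n²) cosh(√8·n) = 0. -/
open Real

/-!
The theta function vanishes at the half-periods `(a + b τ) / 2` with `a`, `b` odd: the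
involution `n ↦ -b - n` of `ℤ` changes the sign of every term of its series. With `a = 1` and
`τ = i c / π` the terms are `(-1)ⁿ exp (-c n² - c b n)`, and averaging over `b = ±k` produces the
hyperbolic cosine.
-/

lemma jacobiTheta₂_term_neg_sub_of_odd {a b : ℤ} (ha : Odd a) (hb : Odd b) (τ : ℂ) (n : ℤ) :
    jacobiTheta₂_term (-b - n) ((a + b * τ) / 2) τ =
      -jacobiTheta₂_term n ((a + b * τ) / 2) τ := by
  have sign_eq : Complex.exp (((-(b + 2 * n) * a : ℤ) : ℂ) * (π * Complex.I)) = -1 := by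
    have odd_exponent : Odd (-(b + 2 * n) * a) := (hb.add_even (even_two_mul n)).neg.mul ha
    rw [Complex.exp_int_mul, Complex.exp_pi_mul_I, odd_exponent.neg_one_zpow]
  rw [jacobiTheta₂_term, jacobiTheta₂_term, neg_eq_neg_one_mul (Complex.exp _), ← sign_eq,
    ← Complex.exp_add]
  congr 1
  push_cast
  ring

theorem jacobiTheta₂_odd_half_period_eq_zero {a b : ℤ} (ha : Odd a) (hb : Odd b) (τ : ℂ) :
    jacobiTheta₂ ((a + b * τ) / 2) τ = 0 := by
  refine self_eq_neg.mp ?_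
  calc jacobiTheta₂ ((a + b * τ) / 2) τ
      = ∑' n : ℤ, jacobiTheta₂_term (-b - n) ((a + b * τ) / 2) τ :=
        ((Equiv.subLeft (-b)).tsum_eq _).symm
    _ = -jacobiTheta₂ ((a + b * τ) / 2) τ := by
        simp only [jacobiTheta₂_term_neg_sub_of_odd ha hb, tsum_neg, jacobiTheta₂]

lemma jacobiTheta₂_term_eq_neg_one_zpow_mul_exp (c b : ℂ) (n : ℤ) :
    jacobiTheta₂_term n ((1 + b * (Complex.I * c / π)) / 2) (Complex.I * c / π) =
      (-1) ^ n * Complex.exp (-c * n ^ 2 - c * b * n) := by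
  rw [jacobiTheta₂_term, ← Complex.exp_pi_mul_I, ← Complex.exp_int_mul, ← Complex.exp_add]
  congr 1
  have pi_ne_zero : (π : ℂ) ≠ 0 := Complex.ofReal_ne_zero.mpr Real.pi_ne_zero
  field_simp
  linear_combination (c * n * (b + n)) * Complex.I_sq

section

variable {c : ℂ} {k : ℤ}

theorem hasSum_neg_one_zpow_mul_exp_of_odd (hc : 0 < c.re) (hk : Odd k) :
    HasSum (fun n : ℤ => (-1) ^ n * Complex.exp (-c * n ^ 2 - c * k * n)) 0 := by
  have im_pos : 0 < (Complex.I * c / π).im := by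
    simpa [Complex.div_ofReal_im] using div_pos hc Real.pi_pos
  have theta_eq_zero := jacobiTheta₂_odd_half_period_eq_zero odd_one hk (Complex.I * c / π)
  have hasSum_theta :=
    hasSum_jacobiTheta₂_term ((1 + k * (Complex.I * c / π)) / 2) im_pos
  rw [Int.cast_one] at theta_eq_zero
  simpa only [theta_eq_zero, jacobiTheta₂_term_eq_neg_one_zpow_mul_exp] using hasSum_theta

theorem alternating_theta_sum_zero_general (hc : 0 < c.re) (hk : Odd k) :
    HasSum (fun n : ℤ => (-1) ^ n * Complex.exp (-c * n ^ 2) * Complex.cosh (c * k * n)) 0 := by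
  have average := ((hasSum_neg_one_zpow_mul_exp_of_odd hc hk).add
    (hasSum_neg_one_zpow_mul_exp_of_odd hc hk.neg)).div_const 2
  rw [add_zero, zero_div] at average
  refine average.congr_fun fun n => ?_
  rw [Complex.cosh]
  push_cast
  simp only [sub_eq_add_neg, Complex.exp_add, mul_neg, neg_mul, neg_neg]
  ring

end

theorem alternating_theta_sum_zero :
    Summable (fun n : ℤ =>
      (-1 : ℝ) ^ n * Real.exp (-Real.sqrt 8 * (n : ℝ) ^ 2) * Real.cosh (Real.sqrt 8 * n)) ∧
    (∑' n : ℤ,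
      (-1 : ℝ) ^ n * Real.exp (-Real.sqrt 8 * (n : ℝ) ^ 2) * Real.cosh (Real.sqrt 8 * n)) = 0 := by
  suffices h : HasSum _ (0 : ℝ) from ⟨h.summable, h.tsum_eq⟩
  exact Complex.hasSum_ofReal.mp <| by
    simpa using alternating_theta_sum_zero_general (c := √8) (by simp) odd_one
end

section
/- Let a < b be real numbers, r ∈ (0, 1), ε ∈ (0, (b−a)/2), t > 0, and s ∈ [rt, t). Let μ := gaussianReal 0 (t−s). Then for every x ∈ ℝ with (a+ε)·t ≤ x ≤ (b−ε)·t, the product of Gaussian tails satisfies μ([x − at, ∞)) · μ([bt − x, ∞)) ≤ (1/(2π·ε²·t)) · exp( −(b−a)²·t / (4(1−r)) ). -/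
open MeasureTheory ProbabilityTheory Real

open scoped NNReal

/-!
Bounding the Gaussian exponent on `[x, ∞)` by its tangent line at `x` gives the Mills-type estimate
`P(X ≥ x) ≤ v / (x - m) * (density at x)` for `X` Gaussian with mean `m` and variance `v`. In the
product of two such tails at heights `y` and `z` above the mean, the exponents combine through
`y² + z² ≥ (y + z)² / 2`. For the heights `x - a t` and `b t - x` the sum is `(b - a) t`, whatever
`x` is.
-/

section GaussianTails

variable {m x y δ : ℝ} {v V : ℝ≥0}

lemma gaussianPDFReal_le_mul_exp_tangent (m : ℝ) (v : ℝ≥0) (x u : ℝ) :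
    gaussianPDFReal m v u ≤ gaussianPDFReal m v x * exp (-((x - m) / v) * (u - x)) := by
  rw [gaussianPDFReal, gaussianPDFReal, mul_assoc (√_)⁻¹, ← exp_add]
  gcongr
  have tangent_gap : -(x - m) ^ 2 / (2 * v) + -((x - m) / v) * (u - x) - -(u - m) ^ 2 / (2 * v) =
      (u - x) ^ 2 / (2 * v) := by
    ring
  have gap_nonneg : 0 ≤ (u - x) ^ 2 / (2 * v) := by positivity
  linarith

lemma integrableOn_exp_mul_sub_Ioi {c : ℝ} (hc : c < 0) (x : ℝ) :
    IntegrableOn (fun u ↦ exp (c * (u - x))) (Set.Ioi x) := by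
  simp only [mul_sub, exp_sub]
  exact (integrableOn_exp_mul_Ioi hc x).div_const _

lemma integral_exp_mul_sub_Ioi {c : ℝ} (hc : c < 0) (x : ℝ) :
    ∫ u in Set.Ioi x, exp (c * (u - x)) = -c⁻¹ := by
  simp only [mul_sub, exp_sub]
  rw [integral_div, integral_exp_mul_Ioi hc]
  field_simp

lemma gaussianReal_Ici_le (hv : v ≠ 0) (hx : m < x) :
    gaussianReal m v (Set.Ici x) ≤ ENNReal.ofReal (v / (x - m) * gaussianPDFReal m v x) := by
  have slope_neg : -((x - m) / v) < 0 := neg_neg_of_pos (div_pos (sub_pos.2 hx) (by positivity))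
  rw [gaussianReal_apply_eq_integral m hv, integral_Ici_eq_integral_Ioi]
  gcongr
  calc ∫ u in Set.Ioi x, gaussianPDFReal m v u
      ≤ ∫ u in Set.Ioi x, gaussianPDFReal m v x * exp (-((x - m) / v) * (u - x)) := by
        refine setIntegral_mono (integrable_gaussianPDFReal m v).integrableOn ?_
          (gaussianPDFReal_le_mul_exp_tangent m v x)
        exact (integrableOn_exp_mul_sub_Ioi slope_neg x).const_mul _
    _ = v / (x - m) * gaussianPDFReal m v x := by
        rw [integral_const_mul, integral_exp_mul_sub_Ioi slope_neg, inv_neg, neg_neg, inv_div,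
          mul_comm]

lemma gaussianPDFReal_mul_gaussianPDFReal_le (m : ℝ) (v : ℝ≥0) (x y : ℝ) :
    gaussianPDFReal m v x * gaussianPDFReal m v y ≤
      (2 * π * v)⁻¹ * exp (-((x - m) + (y - m)) ^ 2 / (4 * v)) := by
  have normalization : (√(2 * π * v))⁻¹ * (√(2 * π * v))⁻¹ = (2 * π * v)⁻¹ := by
    rw [← mul_inv, mul_self_sqrt (by positivity)]
  have parallelogram : -(x - m) ^ 2 / (2 * v) + -(y - m) ^ 2 / (2 * v) =
      -((x - m) + (y - m)) ^ 2 / (4 * v) - (x - y) ^ 2 / (4 * v) := by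
    ring
  rw [gaussianPDFReal, gaussianPDFReal, mul_mul_mul_comm, normalization, ← exp_add, parallelogram]
  gcongr
  exact sub_le_self _ (by positivity)

lemma gaussianReal_Ici_mul_gaussianReal_Ici_le (hv : v ≠ 0) (hx : m < x) (hy : m < y) :
    gaussianReal m v (Set.Ici x) * gaussianReal m v (Set.Ici y) ≤
      ENNReal.ofReal (v / (2 * π * (x - m) * (y - m)) *
        exp (-((x - m) + (y - m)) ^ 2 / (4 * v))) := by
  have hx' : 0 < x - m := sub_pos.2 hx
  have hy' : 0 < y - m := sub_pos.2 hy
  have coeff_nonneg : 0 ≤ v / (x - m) * gaussianPDFReal m v x :=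
    mul_nonneg (by positivity) (gaussianPDFReal_nonneg m v x)
  refine (mul_le_mul' (gaussianReal_Ici_le hv hx) (gaussianReal_Ici_le hv hy)).trans ?_
  rw [← ENNReal.ofReal_mul coeff_nonneg]
  apply ENNReal.ofReal_le_ofReal
  calc v / (x - m) * gaussianPDFReal m v x * (v / (y - m) * gaussianPDFReal m v y)
      = v / (x - m) * (v / (y - m)) * (gaussianPDFReal m v x * gaussianPDFReal m v y) :=
        mul_mul_mul_comm _ _ _ _
    _ ≤ v / (x - m) * (v / (y - m)) *
          ((2 * π * v)⁻¹ * exp (-((x - m) + (y - m)) ^ 2 / (4 * v))) :=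
        mul_le_mul_of_nonneg_left (gaussianPDFReal_mul_gaussianPDFReal_le m v x y) (by positivity)
    _ = v / (2 * π * (x - m) * (y - m)) * exp (-((x - m) + (y - m)) ^ 2 / (4 * v)) := by
        field_simp

lemma gaussianReal_Ici_mul_gaussianReal_Ici_le_of_var_le (hv : v ≠ 0) (hvV : v ≤ V) (hδ : 0 < δ)
    (hx : δ ≤ x - m) (hy : δ ≤ y - m) :
    gaussianReal m v (Set.Ici x) * gaussianReal m v (Set.Ici y) ≤
      ENNReal.ofReal (V / (2 * π * δ ^ 2) * exp (-((x - m) + (y - m)) ^ 2 / (4 * V))) := by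
  have hx' : 0 < x - m := hδ.trans_le hx
  have hy' : 0 < y - m := hδ.trans_le hy
  refine (gaussianReal_Ici_mul_gaussianReal_Ici_le hv (sub_pos.1 hx') (sub_pos.1 hy')).trans ?_
  rw [mul_assoc (2 * π), sq δ, neg_div, neg_div]
  gcongr

end GaussianTails

theorem gaussian_tail_product_bound_general {a b r ε t s x : ℝ} (hε : 0 < ε) (ht : 0 < t)
    (hs : s ∈ Set.Ico (r * t) t) (hx : (a + ε) * t ≤ x ∧ x ≤ (b - ε) * t) :
    gaussianReal 0 (toNNReal (t - s)) (Set.Ici (x - a * t)) *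
        gaussianReal 0 (toNNReal (t - s)) (Set.Ici (b * t - x)) ≤
      ENNReal.ofReal ((1 - r) / (2 * π * ε ^ 2 * t) *
        exp (-(b - a) ^ 2 * t / (4 * (1 - r)))) := by
  have hr : 0 < 1 - r := by
    have : r * t < 1 * t := by linarith [hs.1, hs.2]
    linarith [lt_of_mul_lt_mul_right this ht.le]
  have var_ne_zero : toNNReal (t - s) ≠ 0 := (toNNReal_pos.2 (sub_pos.2 hs.2)).ne'
  have var_le : toNNReal (t - s) ≤ toNNReal ((1 - r) * t) :=
    toNNReal_le_toNNReal (by linarith [hs.1])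
  have prefactor : (1 - r) * t / (2 * π * (ε * t) ^ 2) = (1 - r) / (2 * π * ε ^ 2 * t) := by
    field_simp
  have exponent : -((x - a * t - 0) + (b * t - x - 0)) ^ 2 / (4 * ((1 - r) * t)) =
      -(b - a) ^ 2 * t / (4 * (1 - r)) := by
    field_simp
    ring
  have tails := gaussianReal_Ici_mul_gaussianReal_Ici_le_of_var_le (m := 0) (x := x - a * t)
    (y := b * t - x) var_ne_zero var_le (mul_pos hε ht) (by linarith) (by linarith)
  rwa [coe_toNNReal _ (by positivity), prefactor, exponent] at tails

theorem gaussian_tail_product_bound (a b : ℝ) (hab : a < b)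
    (r : ℝ) (hr : r ∈ Set.Ioo (0 : ℝ) 1)
    (ε : ℝ) (hε : ε ∈ Set.Ioo (0 : ℝ) ((b - a) / 2))
    (t : ℝ) (ht : 0 < t) (s : ℝ) (hs : s ∈ Set.Ico (r * t) t)
    (x : ℝ) (hx : (a + ε) * t ≤ x ∧ x ≤ (b - ε) * t) :
    (gaussianReal 0 (Real.toNNReal (t - s))) (Set.Ici (x - a * t)) *
        (gaussianReal 0 (Real.toNNReal (t - s))) (Set.Ici (b * t - x)) ≤
      ENNReal.ofReal ((1 / (2 * Real.pi * ε ^ 2 * t)) *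
        Real.exp (-(b - a) ^ 2 * t / (4 * (1 - r)))) := by
  refine (gaussian_tail_product_bound_general hε.1 ht hs hx).trans ?_
  gcongr
  linarith [hr.1]
end
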